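/- If H is a 4-uniform hypergraph, then τ_g(H) ≤ (71/252)(n(H) + m(H)). -/

import Mathlib

variable {V : Type} [Fintype V] [DecidableEq V]

/-- The set of legal moves in the transversal game with uncovered edge set `E`:
the vertices hitting at least one uncovered edge. -/
def playable (E : Finset (Finset V)) : Finset V :=
  Finset.univ.filter (fun v => ∃ e ∈ E, v ∈ e)

/-- The number of moves remaining in the transversal game with uncovered edge set `E`
under optimal play, where `ehTurn = true` iff Edge-hitter (the minimizer) moves next;
Staller (the maximizer) moves next iff `ehTurn = false`.  Each move must hit at least
one uncovered edge, and the game ends when no uncovered edge remains. -/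
def gameVal (ehTurn : Bool) (E : Finset (Finset V)) : ℕ :=
  if h : (playable E).Nonempty then
    1 +
      (if ehTurn then
        (playable E).attach.inf' (Finset.attach_nonempty_iff.mpr h)
          (fun v => gameVal (!ehTurn) (E.filter (fun e => v.1 ∉ e)))
      else
        (playable E).attach.sup' (Finset.attach_nonempty_iff.mpr h)
          (fun v => gameVal (!ehTurn) (E.filter (fun e => v.1 ∉ e))))
  else 0
termination_by E.card
decreasing_by
  all_goals
    obtain ⟨v, hv⟩ := v
    simp only [playable, Finset.mem_filter, Finset.mem_univ, true_and] at hv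
    obtain ⟨e, he, hve⟩ := hv
    exact Finset.card_lt_card (Finset.filter_ssubset.mpr ⟨e, he, by simp [hve]⟩)

/-- The game transversal number `τ_g`: Edge-hitter makes the first move. -/
def gameTransversalNum (E : Finset (Finset V)) : ℕ := gameVal true E

/-- The Staller-start game transversal number `τ_g'`: Staller makes the first move. -/
def stallerGameTransversalNum (E : Finset (Finset V)) : ℕ := gameVal false E

/-- The transversal number `τ`: the minimum size of a set of vertices meeting all edges. -/
noncomputable def transversalNum (E : Finset (Finset V)) : ℕ :=
  sInf {n | ∃ T : Finset V, (∀ e ∈ E, ∃ v ∈ T, v ∈ e) ∧ T.card = n}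

set_option linter.unusedSectionVars false

/-- degree of a vertex -/
def dg (E : Finset (Finset V)) (v : V) : ℕ := (E.filter (fun e => v ∈ e)).card

/-- edges left after `x` is played -/
def del (E : Finset (Finset V)) (x : V) : Finset (Finset V) := E.filter (fun e => x ∉ e)

theorem dg_pos_of_playable {E : Finset (Finset V)} {x : V} (hx : x ∈ playable E) :
    1 ≤ dg E x := by
  simp only [playable, Finset.mem_filter, Finset.mem_univ, true_and] at hx
  obtain ⟨e, he, hxe⟩ := hx
  exact Finset.card_pos.mpr ⟨e, by simp [he, hxe]⟩

theorem playable_of_dg_pos {E : Finset (Finset V)} {x : V} (hx : 1 ≤ dg E x) :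
    x ∈ playable E := by
  obtain ⟨e, he⟩ := Finset.card_pos.mp hx
  simp only [Finset.mem_filter] at he
  simp only [playable, Finset.mem_filter, Finset.mem_univ, true_and]
  exact ⟨e, he⟩

theorem gameVal_true_le {E : Finset (Finset V)} {x : V} (hx : x ∈ playable E) :
    gameVal true E ≤ 1 + gameVal false (del E x) := by
  have h : (playable E).Nonempty := ⟨x, hx⟩
  rw [gameVal, dif_pos h, if_pos rfl]
  have := Finset.inf'_le (s := (playable E).attach)
    (fun v => gameVal (!true) (E.filter (fun e => v.1 ∉ e))) (Finset.mem_attach _ ⟨x, hx⟩)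
  exact Nat.add_le_add_left this 1

theorem gameVal_false_le {E : Finset (Finset V)} {B : ℕ}
    (hB : ∀ y ∈ playable E, 1 + gameVal true (del E y) ≤ B) :
    gameVal false E ≤ B := by
  by_cases h : (playable E).Nonempty
  · obtain ⟨y0, hy0⟩ := h
    have h : (playable E).Nonempty := ⟨y0, hy0⟩
    have h1 := hB y0 hy0
    rw [gameVal, dif_pos h, if_neg (by simp)]
    have : (playable E).attach.sup' (Finset.attach_nonempty_iff.mpr h)
          (fun v => gameVal (!false) (E.filter (fun e => v.1 ∉ e))) ≤ B - 1 := by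
      apply Finset.sup'_le
      rintro ⟨y, hy⟩ -
      have := hB y hy
      simp only [del] at this
      simp only [Bool.not_false]
      omega
    omega
  · rw [gameVal, dif_neg h]; exact Nat.zero_le _

theorem tg_round {E : Finset (Finset V)} {x : V} (hx : x ∈ playable E) {c B : ℕ} (hc : 0 < c)
    (h1 : c ≤ B)
    (h2 : ∀ y ∈ playable (del E x), 2 * c + c * gameVal true (del (del E x) y) ≤ B) :
    c * gameVal true E ≤ B := by
  have h3 := gameVal_true_le hx
  have h4 : gameVal false (del E x) ≤ B / c - 1 := by
    apply gameVal_false_le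
    intro y hy
    have h5 := h2 y hy
    have : 2 + gameVal true (del (del E x) y) ≤ B / c := by
      rw [Nat.le_div_iff_mul_le hc]
      linarith [mul_comm c (gameVal true (del (del E x) y))]
    omega
  have h6 : 1 ≤ B / c := by
    rw [Nat.le_div_iff_mul_le hc]; omega
  have h7 : gameVal true E ≤ B / c := by omega
  rw [Nat.le_div_iff_mul_le hc] at h7
  linarith [mul_comm c (gameVal true E)]

theorem gameVal_empty (b : Bool) {E : Finset (Finset V)} (h : ∀ x, dg E x = 0) :
    gameVal b E = 0 := by
  rw [gameVal, dif_neg]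
  rintro ⟨x, hx⟩
  have := dg_pos_of_playable hx
  have := h x
  omega

theorem card_del (E : Finset (Finset V)) (x : V) : (del E x).card + dg E x = E.card := by
  unfold del dg
  rw [add_comm]
  exact Finset.card_filter_add_card_filter_not _

theorem gameVal_le_card (n : ℕ) : ∀ E : Finset (Finset V), E.card ≤ n →
    gameVal true E ≤ E.card := by
  induction n using Nat.strong_induction_on with
  | _ n ih =>
  intro E hE
  by_cases h : ∀ x, dg E x = 0
  · rw [gameVal_empty _ h]; exact Nat.zero_le _
  · push Not at h
    obtain ⟨x, hx⟩ := h
    have hc := card_del E x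
    have := tg_round (E := E) (x := x) (playable_of_dg_pos (by omega)) (c := 1) (B := E.card)
      (by omega) (by omega) (by
        intro y hy
        have hc2 := card_del (del E x) y
        have := dg_pos_of_playable hy
        have := ih (del (del E x) y).card (by omega) _ le_rfl
        omega)
    omega

theorem dg_split (E : Finset (Finset V)) (x v : V) :
    dg E v = dg (del E x) v + dg (E.filter (fun e => x ∈ e)) v := by
  unfold dg del
  have h := Finset.card_filter_add_card_filter_not (s := E.filter (fun e => v ∈ e)) (fun e => x ∈ e)
  have h1 : (E.filter (fun e => v ∈ e)).filter (fun e => x ∈ e)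
      = (E.filter (fun e => x ∈ e)).filter (fun e => v ∈ e) := by
    ext; simp; tauto
  have h2 : (E.filter (fun e => v ∈ e)).filter (fun e => x ∉ e)
      = (E.filter (fun e => x ∉ e)).filter (fun e => v ∈ e) := by
    ext; simp; tauto
  rw [h1, h2] at h
  omega

theorem sum_dg (E : Finset (Finset V)) (h4 : ∀ e ∈ E, e.card = 4) :
    ∑ v, dg E v = 4 * E.card := by
  unfold dg
  simp only [Finset.card_filter]
  rw [Finset.sum_comm]
  have : ∀ e ∈ E, ∑ v : V, (if v ∈ e then 1 else 0) = 4 := by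
    intro e he
    rw [← h4 e he]
    simp
  rw [Finset.sum_congr rfl this]
  simp [mul_comm]

theorem dg_del_self (E : Finset (Finset V)) (x : V) : dg (del E x) x = 0 := by
  unfold dg del
  rw [Finset.card_eq_zero, Finset.filter_filter]
  apply Finset.filter_false_of_mem
  intro e _ h
  exact h.1 h.2

theorem mem_del {E : Finset (Finset V)} {x : V} {e : Finset V} :
    e ∈ del E x ↔ e ∈ E ∧ x ∉ e := by simp [del]

theorem dg_del_le (E : Finset (Finset V)) (x v : V) : dg (del E x) v ≤ dg E v := by
  rw [dg_split E x v]; omega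

theorem tg_slope {f : ℕ → ℕ} {δ Δ : ℕ} (hf : ∀ d, d < Δ → f d + δ ≤ f (d + 1)) (a j : ℕ)
    (h : a + j ≤ Δ) : f a + δ * j ≤ f (a + j) := by
  induction j with
  | zero => simp
  | succ j ih =>
    have h1 := ih (by omega)
    have h2 := hf (a + j) (by omega)
    have : a + (j + 1) = a + j + 1 := by omega
    rw [this]
    linarith

theorem move_gain (E : Finset (Finset V)) (h4 : ∀ e ∈ E, e.card = 4) {f : ℕ → ℕ} {δ Δ : ℕ}
    (hf0 : f 0 = 0) (hf : ∀ d, d < Δ → f d + δ ≤ f (d + 1)) (hΔ : ∀ v, dg E v ≤ Δ) (x : V) :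
    ∑ v, f (dg (del E x) v) + f (dg E x) + 3 * δ * dg E x ≤ ∑ v, f (dg E v) := by
  have hs := sum_dg (E.filter (fun e => x ∈ e)) (fun e he => h4 e (Finset.mem_filter.mp he).1)
  have hk : (E.filter (fun e => x ∈ e)).card = dg E x := rfl
  rw [hk] at hs
  have key : ∑ v, (f (dg (del E x) v) + δ * dg (E.filter (fun e => x ∈ e)) v
        + (if v = x then f (dg E x) else 0))
      ≤ ∑ v, (f (dg E v) + (if v = x then δ * dg E x else 0)) := by
    apply Finset.sum_le_sum
    intro v _
    by_cases hv : v = x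
    · subst hv
      have h1 := dg_split E v v
      rw [dg_del_self] at h1 ⊢
      simp only [if_true, hf0]
      have : dg (E.filter (fun e => v ∈ e)) v = dg E v := by omega
      rw [this]; omega
    · simp only [hv, if_false, add_zero]
      have h1 := dg_split E x v
      have h2 := hΔ v
      rw [h1] at h2 ⊢
      exact tg_slope hf _ _ h2
  simp only [Finset.sum_add_distrib, ← Finset.mul_sum, hs, Finset.sum_ite_eq', Finset.mem_univ,
    if_true] at key
  nlinarith

/-- vertices of degree two -/
def N2 (E : Finset (Finset V)) : Finset V := Finset.univ.filter (fun v => dg E v = 2)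

/-- closed neighbourhood -/
def nb (E : Finset (Finset V)) (x : V) : Finset V :=
  Finset.univ.filter (fun v => ∃ e ∈ E, x ∈ e ∧ v ∈ e)

/-- There is a degree-two vertex whose play destroys at most six degree-two vertices. -/
def Irr (E : Finset (Finset V)) : Prop := ∃ x ∈ N2 E, (N2 E ∩ nb E x).card ≤ 6

theorem mem_N2 {E : Finset (Finset V)} {x : V} : x ∈ N2 E ↔ dg E x = 2 := by simp [N2]

theorem mem_nb {E : Finset (Finset V)} {x v : V} :
    v ∈ nb E x ↔ ∃ e ∈ E, x ∈ e ∧ v ∈ e := by simp [nb]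

theorem two_edges {E : Finset (Finset V)} {x : V} (h : dg E x = 2) :
    ∃ e f, e ∈ E ∧ f ∈ E ∧ e ≠ f ∧ x ∈ e ∧ x ∈ f ∧ nb E x = e ∪ f := by
  obtain ⟨e, f, hef, hs⟩ := Finset.card_eq_two.mp h
  have h1 : ∀ g, (g ∈ E ∧ x ∈ g) ↔ (g = e ∨ g = f) := by
    intro g
    have : g ∈ E.filter (fun e => x ∈ e) ↔ g ∈ ({e, f} : Finset (Finset V)) := by rw [hs]
    simpa using this
  have he := (h1 e).mpr (Or.inl rfl)
  have hf := (h1 f).mpr (Or.inr rfl)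
  refine ⟨e, f, he.1, hf.1, hef, he.2, hf.2, ?_⟩
  ext v
  rw [mem_nb, Finset.mem_union]
  constructor
  · rintro ⟨g, hg, hxg, hvg⟩
    rcases (h1 g).mp ⟨hg, hxg⟩ with rfl | rfl
    · exact Or.inl hvg
    · exact Or.inr hvg
  · rintro (h | h)
    · exact ⟨e, he.1, he.2, h⟩
    · exact ⟨f, hf.1, hf.2, h⟩

theorem one_edge {E : Finset (Finset V)} {x : V} (h : dg E x = 1) :
    ∃ e, e ∈ E ∧ x ∈ e ∧ nb E x = e ∧ del E x = E.erase e := by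
  obtain ⟨e, hs⟩ := Finset.card_eq_one.mp h
  have h1 : ∀ g, (g ∈ E ∧ x ∈ g) ↔ (g = e) := by
    intro g
    have : g ∈ E.filter (fun e => x ∈ e) ↔ g ∈ ({e} : Finset (Finset V)) := by rw [hs]
    simpa using this
  have he := (h1 e).mpr rfl
  refine ⟨e, he.1, he.2, ?_, ?_⟩
  · ext v
    rw [mem_nb]
    constructor
    · rintro ⟨g, hg, hxg, hvg⟩
      rw [← (h1 g).mp ⟨hg, hxg⟩]; exact hvg
    · intro h
      exact ⟨e, he.1, he.2, h⟩
  · ext g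
    rw [mem_del, Finset.mem_erase]
    have := h1 g
    tauto

/-- a vertex of two distinct edges has degree two -/
theorem dg_two_of_mem {E : Finset (Finset V)} (hΔ : ∀ v, dg E v ≤ 2) {e f : Finset V} {v : V}
    (he : e ∈ E) (hf : f ∈ E) (hef : e ≠ f) (hve : v ∈ e) (hvf : v ∈ f) : v ∈ N2 E := by
  rw [mem_N2]
  refine le_antisymm (hΔ v) ?_
  rw [← Finset.card_pair hef]
  apply Finset.card_le_card
  intro g hg
  simp only [Finset.mem_insert, Finset.mem_singleton] at hg
  rcases hg with rfl | rfl <;> simp [*]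

theorem tri {E : Finset (Finset V)} (hΔ : ∀ v, dg E v ≤ 2) {e f g : Finset V} {v : V}
    (he : e ∈ E) (hf : f ∈ E) (hg : g ∈ E) (hef : e ≠ f) (heg : e ≠ g) (hfg : f ≠ g)
    (hve : v ∈ e) (hvf : v ∈ f) (hvg : v ∈ g) : False := by
  have h3 : ({e, f, g} : Finset (Finset V)).card = 3 := Finset.card_eq_three.mpr
    ⟨e, f, g, hef, heg, hfg, rfl⟩
  have : ({e, f, g} : Finset (Finset V)).card ≤ dg E v := by
    apply Finset.card_le_card
    intro k hk
    simp only [Finset.mem_insert, Finset.mem_singleton] at hk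
    rcases hk with rfl | rfl | rfl <;> simp [*]
  have := hΔ v
  omega

theorem nb_eq {E : Finset (Finset V)} (hΔ : ∀ v, dg E v ≤ 2) {e f : Finset V} {v : V}
    (he : e ∈ E) (hf : f ∈ E) (hef : e ≠ f) (hve : v ∈ e) (hvf : v ∈ f) : nb E v = e ∪ f := by
  ext w
  rw [mem_nb, Finset.mem_union]
  constructor
  · rintro ⟨g, hg, hvg, hwg⟩
    by_contra hcon
    have h1 : e ≠ g := by rintro rfl; tauto
    have h2 : f ≠ g := by rintro rfl; tauto
    exact tri hΔ he hf hg hef h1 h2 hve hvf hvg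
  · rintro (h | h)
    · exact ⟨e, he, hve, h⟩
    · exact ⟨f, hf, hvf, h⟩

theorem N2_del {E : Finset (Finset V)} (hΔ : ∀ v, dg E v ≤ 2) (x : V) :
    N2 (del E x) = N2 E \ nb E x := by
  ext v
  have h1 := dg_split E x v
  have h2 := hΔ v
  have h3 : dg (E.filter (fun e => x ∈ e)) v = 0 ↔ v ∉ nb E x := by
    unfold dg
    rw [Finset.card_eq_zero, Finset.filter_eq_empty_iff, mem_nb]
    push Not
    constructor
    · intro h e he hx
      exact h (Finset.mem_filter.mpr ⟨he, hx⟩)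
    · intro h e he
      rw [Finset.mem_filter] at he
      exact h e he.1 he.2
  rw [Finset.mem_sdiff, mem_N2, mem_N2, ← h3]
  omega

theorem N2_card {E : Finset (Finset V)} (hΔ : ∀ v, dg E v ≤ 2) (x : V) :
    (N2 E).card = (N2 (del E x)).card + (N2 E ∩ nb E x).card := by
  rw [N2_del hΔ, Finset.card_sdiff_add_card_inter]

theorem drop_two {E : Finset (Finset V)} (h4 : ∀ e ∈ E, e.card = 4) {x : V} (h : dg E x = 2) :
    (N2 E ∩ nb E x).card ≤ 7 := by
  obtain ⟨e, f, he, hf, -, hxe, hxf, hnb⟩ := two_edges h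
  have h1 := Finset.card_union_add_card_inter e f
  have h2 : 1 ≤ (e ∩ f).card := Finset.card_pos.mpr ⟨x, by simp [hxe, hxf]⟩
  have h3 : (N2 E ∩ nb E x).card ≤ (e ∪ f).card := by
    rw [hnb]; exact Finset.card_le_card Finset.inter_subset_right
  rw [h4 e he, h4 f hf] at h1
  omega

theorem drop_one {E : Finset (Finset V)} (h4 : ∀ e ∈ E, e.card = 4) {x : V} (h : dg E x = 1) :
    (N2 E ∩ nb E x).card ≤ 3 := by
  obtain ⟨e, he, hxe, hnb, -⟩ := one_edge h
  have : (e.erase x).card = 3 := by rw [Finset.card_erase_of_mem hxe, h4 e he]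
  rw [← this, hnb]
  apply Finset.card_le_card
  intro v hv
  rw [Finset.mem_inter, mem_N2] at hv
  rw [Finset.mem_erase]
  refine ⟨?_, hv.2⟩
  rintro rfl
  omega

theorem irr_of {E : Finset (Finset V)} (h4 : ∀ e ∈ E, e.card = 4) (hΔ : ∀ v, dg E v ≤ 2)
    {e : Finset V} {v w : V} (he : e ∈ E) (hw : w ∈ e) (hw2 : w ∈ N2 E) (hv : v ∈ e)
    (hv2 : v ∉ N2 E) : Irr E := by
  refine ⟨w, hw2, ?_⟩
  obtain ⟨f, hf, hfe, hwf⟩ : ∃ f ∈ E, f ≠ e ∧ w ∈ f := by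
    obtain ⟨a, b, ha, hb, hab, hwa, hwb, -⟩ := two_edges (mem_N2.mp hw2)
    by_cases h : a = e
    · exact ⟨b, hb, fun h' => hab (h.trans h'.symm), hwb⟩
    · exact ⟨a, ha, h, hwa⟩
  rw [nb_eq hΔ he hf hfe.symm hw hwf]
  have h1 : (e.erase v).card = 3 := by rw [Finset.card_erase_of_mem hv, h4 e he]
  have h2 : (f.erase w).card = 3 := by rw [Finset.card_erase_of_mem hwf, h4 f hf]
  have h3 := Finset.card_union_le (e.erase v) (f.erase w)
  have h4 : (N2 E ∩ (e ∪ f)).card ≤ (e.erase v ∪ f.erase w).card := by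
    apply Finset.card_le_card
    intro u hu
    simp only [Finset.mem_inter, Finset.mem_union, Finset.mem_erase] at hu ⊢
    have : u ≠ v := by rintro rfl; exact hv2 hu.1
    by_cases h : u = w
    · subst h; tauto
    · tauto
  omega

theorem drop_of_mult {E : Finset (Finset V)} (h4 : ∀ e ∈ E, e.card = 4) (hΔ : ∀ v, dg E v ≤ 2)
    {e f : Finset V} {w : V} (he : e ∈ E) (hf : f ∈ E) (hef : e ≠ f) (hw : w ∈ e) (hwf : w ∈ f) :
    (N2 E ∩ nb E w).card + (e ∩ f).card ≤ 8 := by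
  rw [nb_eq hΔ he hf hef hw hwf]
  have h1 := Finset.card_union_add_card_inter e f
  have h3 : (N2 E ∩ (e ∪ f)).card ≤ (e ∪ f).card := Finset.card_le_card Finset.inter_subset_right
  rw [h4 e he, h4 f hf] at h1
  omega

theorem del_unif {E : Finset (Finset V)} (h4 : ∀ e ∈ E, e.card = 4) (x : V) :
    ∀ e ∈ del E x, e.card = 4 := fun e he => h4 e (mem_del.mp he).1

theorem del_deg {E : Finset (Finset V)} {Δ : ℕ} (hΔ : ∀ v, dg E v ≤ Δ) (x : V) :
    ∀ v, dg (del E x) v ≤ Δ := fun v => (dg_del_le E x v).trans (hΔ v)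

/-- The other edge `l` at a degree-two vertex `z` of Staller's edge. -/
theorem leaf {E : Finset (Finset V)} (h4 : ∀ e ∈ E, e.card = 4) (hΔ : ∀ v, dg E v ≤ 2)
    {x y z : V} {e : Finset V} (hy : dg (del E x) y = 1) (he : e ∈ del E x) (hye : y ∈ e)
    (hirr : ¬ Irr (del (del E x) y)) (hz : z ∈ e) (hz2 : z ∈ N2 (del E x)) :
    ∃ l ∈ del E x, l ≠ e ∧ z ∈ l ∧ ∀ v ∈ l, v ∈ N2 E → v ∈ nb E x ∨ v ∈ e := by
  obtain ⟨l, hl, hle, hzl⟩ : ∃ f ∈ del E x, f ≠ e ∧ z ∈ f := by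
    obtain ⟨a, b, ha, hb, hab, hwa, hwb, -⟩ := two_edges (mem_N2.mp hz2)
    by_cases h : a = e
    · exact ⟨b, hb, fun h' => hab (h.trans h'.symm), hwb⟩
    · exact ⟨a, ha, h, hwa⟩
  refine ⟨l, hl, hle, hzl, ?_⟩
  intro v hvl hv2
  by_contra hcon
  push Not at hcon
  obtain ⟨e0, he0, hye0, hnb, hdel⟩ := one_edge hy
  have hee : e = e0 := by
    by_contra hne
    have h2 := dg_two_of_mem (del_deg hΔ x) he he0 hne hye hye0
    rw [mem_N2] at h2
    omega
  subst hee
  have hN : N2 (del (del E x) y) = (N2 E \ nb E x) \ e := by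
    rw [N2_del (del_deg hΔ x), N2_del hΔ, hnb]
  apply hirr
  refine irr_of (e := l) (v := z) (w := v) (del_unif (del_unif h4 x) y)
    (del_deg (del_deg hΔ x) y) ?_ hvl ?_ hzl ?_
  · rw [hdel]; exact Finset.mem_erase.mpr ⟨hle, hl⟩
  · rw [hN]; simp [hv2, hcon]
  · rw [hN]; simp [hz]

theorem keyR {E : Finset (Finset V)} (h4 : ∀ e ∈ E, e.card = 4) (hΔ : ∀ v, dg E v ≤ 2)
    (hreg : ¬ Irr E) {x y : V} (hx : x ∈ N2 E) (hy : dg (del E x) y = 1)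
    (h3 : (N2 (del E x) ∩ nb (del E x) y).card = 3) : Irr (del (del E x) y) := by
  by_contra hirr
  obtain ⟨e, he, hye, hnb, -⟩ := one_edge hy
  rw [hnb] at h3
  obtain ⟨z, hz⟩ := Finset.card_pos.mp (show 0 < (N2 (del E x) ∩ e).card by omega)
  rw [Finset.mem_inter] at hz
  obtain ⟨l, hl, hle, hzl, hcov⟩ := leaf h4 hΔ hy he hye hirr hz.2 hz.1
  obtain ⟨e1, e2, he1, he2, h12, hx1, hx2, hnbx⟩ := two_edges (mem_N2.mp hx)
  have hlE := mem_del.mp hl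
  have heE := mem_del.mp he
  have hz2 : z ∈ N2 E := by
    have := hz.1
    rw [N2_del hΔ, Finset.mem_sdiff] at this
    exact this.1
  have hall : ∀ v ∈ l, v ∈ N2 E := by
    intro v hv
    by_contra hv2
    exact hreg (irr_of h4 hΔ hlE.1 hzl hz2 hv hv2)
  have hmult : ∀ f ∈ E, f ≠ l → (l ∩ f).card ≤ 1 := by
    intro f hf hfl
    by_contra hcon
    obtain ⟨w, hw⟩ := Finset.card_pos.mp (show 0 < (l ∩ f).card by omega)
    rw [Finset.mem_inter] at hw
    have := drop_of_mult h4 hΔ hlE.1 hf hfl.symm hw.1 hw.2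
    exact hreg ⟨w, dg_two_of_mem hΔ hlE.1 hf hfl.symm hw.1 hw.2, by omega⟩
  have c0 := hmult e heE.1 hle.symm
  have c1 := hmult e1 he1 (by rintro rfl; exact hlE.2 hx1)
  have c2 := hmult e2 he2 (by rintro rfl; exact hlE.2 hx2)
  have hsub : l ⊆ (l ∩ e) ∪ ((l ∩ e1) ∪ (l ∩ e2)) := by
    intro v hv
    have := hcov v hv (hall v hv)
    rw [hnbx, Finset.mem_union] at this
    simp only [Finset.mem_union, Finset.mem_inter]
    tauto
  have d0 := Finset.card_le_card hsub
  have d1 := Finset.card_union_le (l ∩ e) ((l ∩ e1) ∪ (l ∩ e2))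
  have d2 := Finset.card_union_le (l ∩ e1) (l ∩ e2)
  rw [h4 l hlE.1] at d0
  omega

theorem keyI {E : Finset (Finset V)} (h4 : ∀ e ∈ E, e.card = 4) (hΔ : ∀ v, dg E v ≤ 2)
    (hmin : ∀ w ∈ N2 E, 6 ≤ (N2 E ∩ nb E w).card) {x y : V} {e1 e2 : Finset V}
    (he1 : e1 ∈ E) (he2 : e2 ∈ E) (h12 : e1 ≠ e2) (hx1 : x ∈ e1) (hx2 : x ∈ e2)
    (hD : (N2 E ∩ nb E x).card = 6)
    (hm : 2 ≤ (e1 ∩ e2).card ∨ ∀ e ∈ E, ∀ f ∈ E, e ≠ f → (e ∩ f).card ≤ 1)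
    (hy : dg (del E x) y = 1)
    (h3 : (N2 (del E x) ∩ nb (del E x) y).card = 3) : Irr (del (del E x) y) := by
  by_contra hirr
  obtain ⟨e, he, hye, hnb, -⟩ := one_edge hy
  rw [hnb] at h3
  have hnbx := nb_eq hΔ he1 he2 h12 hx1 hx2
  have heE := mem_del.mp he
  rw [hnbx] at hD
  set A := N2 E ∩ (e1 ∪ e2) with hA
  have hN' : N2 (del E x) = N2 E \ (e1 ∪ e2) := by rw [N2_del hΔ, hnbx]
  have hxA : x ∈ e1 ∩ e2 := Finset.mem_inter.mpr ⟨hx1, hx2⟩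
  -- the free part of the neighbourhood
  have hcommon : e1 ∩ e2 ⊆ A := by
    intro v hv
    rw [Finset.mem_inter] at hv
    rw [hA, Finset.mem_inter, Finset.mem_union]
    exact ⟨dg_two_of_mem hΔ he1 he2 h12 hv.1 hv.2, Or.inl hv.1⟩
  have hP : (A \ (e1 ∩ e2)).card + (e1 ∩ e2).card = 6 := by
    rw [Finset.card_sdiff_add_card_eq_card hcommon, hD]
  have hinP : ∀ f ∈ del E x, f ∩ A ⊆ A \ (e1 ∩ e2) := by
    intro f hf v hv
    have hfE := mem_del.mp hf
    rw [Finset.mem_inter] at hv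
    refine Finset.mem_sdiff.mpr ⟨hv.2, fun h => ?_⟩
    rw [Finset.mem_inter] at h
    exact tri hΔ he1 he2 hfE.1 h12 (by rintro rfl; exact hfE.2 hx1)
      (by rintro rfl; exact hfE.2 hx2) h.1 h.2 hv.1
  have hdisj : ∀ f ∈ del E x, ∀ g ∈ del E x, f ≠ g → Disjoint (f ∩ A) (g ∩ A) := by
    intro f hf g hg hfg
    rw [Finset.disjoint_left]
    intro v hvf hvg
    have hfE := mem_del.mp hf
    have hgE := mem_del.mp hg
    rw [Finset.mem_inter] at hvf hvg
    have h := hvf.2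
    rw [hA, Finset.mem_inter, Finset.mem_union] at h
    rcases h.2 with h | h
    · exact tri hΔ he1 hfE.1 hgE.1 (by rintro rfl; exact hfE.2 hx1)
        (by rintro rfl; exact hgE.2 hx1) hfg h hvf.1 hvg.1
    · exact tri hΔ he2 hfE.1 hgE.1 (by rintro rfl; exact hfE.2 hx2)
        (by rintro rfl; exact hgE.2 hx2) hfg h hvf.1 hvg.1
  have hNe : (N2 E ∩ e).card = 3 + (e ∩ A).card := by
    rw [← h3, hN']
    rw [← Finset.card_union_of_disjoint]
    · congr 1
      ext v
      simp only [hA, Finset.mem_inter, Finset.mem_union, Finset.mem_sdiff]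
      tauto
    · rw [Finset.disjoint_left]
      intro v h h'
      simp only [hA, Finset.mem_inter, Finset.mem_union, Finset.mem_sdiff] at h h'
      tauto
  have hNe4 : (N2 E ∩ e).card ≤ 4 := by
    rw [← h4 e heE.1]; exact Finset.card_le_card Finset.inter_subset_right
  have hleaf : ∀ z ∈ N2 (del E x) ∩ e, ∃ l ∈ del E x, l ≠ e ∧ z ∈ l ∧
      3 ≤ (l ∩ A).card + (e ∩ A).card ∧ (e ∩ l).card ≤ 2 := by
    intro z hz
    rw [Finset.mem_inter] at hz
    obtain ⟨l, hl, hle, hzl, hcov⟩ := leaf h4 hΔ hy he hye hirr hz.2 hz.1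
    have hlE := mem_del.mp hl
    have hz2 : z ∈ N2 E := by
      have := hz.1
      rw [N2_del hΔ, Finset.mem_sdiff] at this
      exact this.1
    have h6 := hmin z hz2
    have h8 := drop_of_mult h4 hΔ heE.1 hlE.1 hle.symm hz.2 hzl
    refine ⟨l, hl, hle, hzl, ?_, by omega⟩
    rw [nb_eq hΔ heE.1 hlE.1 hle.symm hz.2 hzl] at h6
    have hsub : N2 E ∩ (e ∪ l) ⊆ (N2 E ∩ e) ∪ (l ∩ A) := by
      intro v hv
      simp only [hA, Finset.mem_inter, Finset.mem_union] at hv ⊢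
      by_cases hve : v ∈ e
      · tauto
      · have := hcov v (by tauto) hv.1
        rw [hnbx, Finset.mem_union] at this
        tauto
    have d0 := Finset.card_le_card hsub
    have d1 := Finset.card_union_le (N2 E ∩ e) (l ∩ A)
    omega
  obtain ⟨z1, z2, z3, z12, z13, z23, hS⟩ := Finset.card_eq_three.mp h3
  have hzmem : ∀ z, z ∈ N2 (del E x) ∩ e ↔ z = z1 ∨ z = z2 ∨ z = z3 := by
    intro z; rw [hS]; simp
  have m1 := (hzmem z1).mpr (by tauto)
  have m2 := (hzmem z2).mpr (by tauto)
  have m3 := (hzmem z3).mpr (by tauto)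
  obtain ⟨l1, hl1, hle1, hz1, hc1, hi1⟩ := hleaf z1 m1
  obtain ⟨l2, hl2, hle2, hz2, hc2, hi2⟩ := hleaf z2 m2
  obtain ⟨l3, hl3, hle3, hz3, hc3, hi3⟩ := hleaf z3 m3
  rw [Finset.mem_inter] at m1 m2 m3
  -- two distinct leaves
  have two : ∀ f ∈ del E x, ∀ g ∈ del E x, f ≠ g → e ≠ f → e ≠ g →
      (e ∩ A).card + ((f ∩ A).card + (g ∩ A).card) ≤ (A \ (e1 ∩ e2)).card := by
    intro f hf g hg hfg hef heg
    rw [← Finset.card_union_of_disjoint (hdisj f hf g hg hfg), ← Finset.card_union_of_disjoint]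
    · apply Finset.card_le_card
      exact Finset.union_subset (hinP e he) (Finset.union_subset (hinP f hf) (hinP g hg))
    · rw [Finset.disjoint_union_right]
      exact ⟨hdisj e he f hf hef, hdisj e he g hg heg⟩
  have hpair : ∀ l z z' : _, z ≠ z' → z ∈ e → z' ∈ e → z ∈ l → z' ∈ l → 2 ≤ (e ∩ l).card := by
    intro l z z' hne h1 h2 h3 h4
    rw [← Finset.card_pair hne]
    apply Finset.card_le_card
    intro v hv
    simp only [Finset.mem_insert, Finset.mem_singleton] at hv
    rw [Finset.mem_inter]
    rcases hv with rfl | rfl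
    · exact ⟨h1, h3⟩
    · exact ⟨h2, h4⟩
  rcases hm with hm | hm
  · by_cases h : l1 = l2
    · by_cases h' : l1 = l3
      · subst h; subst h'
        have : 3 ≤ (e ∩ l1).card := by
          rw [← h3]
          apply Finset.card_le_card
          intro v hv
          have hve := (Finset.mem_inter.mp hv).2
          rw [Finset.mem_inter]
          rcases (hzmem v).mp hv with rfl | rfl | rfl
          · exact ⟨hve, hz1⟩
          · exact ⟨hve, hz2⟩
          · exact ⟨hve, hz3⟩
        omega
      · have := two l1 hl1 l3 hl3 h' hle1.symm hle3.symm
        omega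
    · have := two l1 hl1 l2 hl2 h hle1.symm hle2.symm
      omega
  · have n12 : l1 ≠ l2 := by
      rintro rfl
      have := hpair l1 z1 z2 z12 m1.2 m2.2 hz1 hz2
      have := hm e heE.1 l1 (mem_del.mp hl1).1 hle1.symm
      omega
    have n13 : l1 ≠ l3 := by
      rintro rfl
      have := hpair l1 z1 z3 z13 m1.2 m3.2 hz1 hz3
      have := hm e heE.1 l1 (mem_del.mp hl1).1 hle1.symm
      omega
    have n23 : l2 ≠ l3 := by
      rintro rfl
      have := hpair l2 z2 z3 z23 m2.2 m3.2 hz2 hz3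
      have := hm e heE.1 l2 (mem_del.mp hl2).1 hle2.symm
      omega
    have hsum : (e ∩ A).card + ((l1 ∩ A).card + ((l2 ∩ A).card + (l3 ∩ A).card))
        ≤ (A \ (e1 ∩ e2)).card := by
      rw [← Finset.card_union_of_disjoint (hdisj l2 hl2 l3 hl3 n23),
        ← Finset.card_union_of_disjoint, ← Finset.card_union_of_disjoint]
      · apply Finset.card_le_card
        exact Finset.union_subset (hinP e he) (Finset.union_subset (hinP l1 hl1)
          (Finset.union_subset (hinP l2 hl2) (hinP l3 hl3)))
      · rw [Finset.disjoint_union_right, Finset.disjoint_union_right]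
        exact ⟨hdisj e he l1 hl1 hle1.symm, hdisj e he l2 hl2 hle2.symm,
          hdisj e he l3 hl3 hle3.symm⟩
      · rw [Finset.disjoint_union_right]
        exact ⟨hdisj l1 hl1 l2 hl2 n12, hdisj l1 hl1 l3 hl3 n13⟩
    have : 0 < (e1 ∩ e2).card := Finset.card_pos.mpr ⟨x, hxA⟩
    omega

/-- Edge-hitter's choice in an irregular state. -/
theorem choiceI {E : Finset (Finset V)} (h4 : ∀ e ∈ E, e.card = 4) (hΔ : ∀ v, dg E v ≤ 2)
    (hirr : Irr E) : ∃ x ∈ N2 E, (N2 E ∩ nb E x).card ≤ 6 ∧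
      ∀ y, dg (del E x) y = 1 →
        (N2 E ∩ nb E x).card + (N2 (del E x) ∩ nb (del E x) y).card ≤ 8 ∨
        Irr (del (del E x) y) := by
  by_cases h5 : ∃ x ∈ N2 E, (N2 E ∩ nb E x).card ≤ 5
  · obtain ⟨x, hx, hD⟩ := h5
    refine ⟨x, hx, by omega, fun y hy => Or.inl ?_⟩
    have := drop_one (del_unif h4 x) hy
    omega
  · push Not at h5
    have fin : ∀ x ∈ N2 E, ∀ e1 ∈ E, ∀ e2 ∈ E, e1 ≠ e2 → x ∈ e1 → x ∈ e2 →
        (N2 E ∩ nb E x).card = 6 →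
        (2 ≤ (e1 ∩ e2).card ∨ ∀ e ∈ E, ∀ f ∈ E, e ≠ f → (e ∩ f).card ≤ 1) →
        ∀ y, dg (del E x) y = 1 →
        (N2 E ∩ nb E x).card + (N2 (del E x) ∩ nb (del E x) y).card ≤ 8 ∨
        Irr (del (del E x) y) := by
      intro x hx e1 he1 e2 he2 h12 hx1 hx2 hD hm y hy
      have h3 := drop_one (del_unif h4 x) hy
      by_cases h : (N2 (del E x) ∩ nb (del E x) y).card = 3
      · exact Or.inr (keyI h4 hΔ (fun w hw => h5 w hw) he1 he2 h12 hx1 hx2 hD hm hy h)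
      · left; omega
    by_cases hm : ∃ e1 ∈ E, ∃ e2 ∈ E, e1 ≠ e2 ∧ 2 ≤ (e1 ∩ e2).card
    · obtain ⟨e1, he1, e2, he2, h12, hc⟩ := hm
      obtain ⟨x, hx⟩ := Finset.card_pos.mp (show 0 < (e1 ∩ e2).card by omega)
      rw [Finset.mem_inter] at hx
      have hx2 := dg_two_of_mem hΔ he1 he2 h12 hx.1 hx.2
      have h6 := h5 x hx2
      have h8 := drop_of_mult h4 hΔ he1 he2 h12 hx.1 hx.2
      exact ⟨x, hx2, by omega, fin x hx2 e1 he1 e2 he2 h12 hx.1 hx.2 (by omega) (Or.inl hc)⟩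
    · obtain ⟨x, hx, hD⟩ := hirr
      obtain ⟨e1, e2, he1, he2, h12, hx1, hx2, -⟩ := two_edges (mem_N2.mp hx)
      have h6 := h5 x hx
      refine ⟨x, hx, hD, fin x hx e1 he1 e2 he2 h12 hx1 hx2 (by omega) (Or.inr ?_)⟩
      intro e he f hf hef
      by_contra hcon
      exact hm ⟨e, he, f, hf, hef, by omega⟩

theorem phase2 (n : ℕ) : ∀ E : Finset (Finset V), E.card = n → (∀ e ∈ E, e.card = 4) →
    (∀ v, dg E v ≤ 2) →
    9 * gameVal true E + (N2 E).card ≤ 9 * E.card ∧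
    (Irr E → 9 * gameVal true E + (N2 E).card + 1 ≤ 9 * E.card) := by
  induction n using Nat.strong_induction_on with
  | _ n ih =>
  intro E hE h4 hΔ
  have hI : Irr E → 9 * gameVal true E + (N2 E).card + 1 ≤ 9 * E.card := by
    intro hirr
    obtain ⟨x, hx, hD, hresp⟩ := choiceI h4 hΔ hirr
    have hx2 := mem_N2.mp hx
    have c1 := card_del E x
    have n1 := N2_card hΔ x
    have hempty : (N2 (del E x)).card ≤ 9 * (del E x).card := by
      by_cases h0 : del E x = ∅
      · have : N2 (del E x) = ∅ := by
          rw [h0]; ext v; simp [N2, dg]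
        rw [this]; simp
      · have := (ih (del E x).card (by omega) (del E x) rfl (del_unif h4 x) (del_deg hΔ x)).1
        omega
    have key := tg_round (E := E) (x := x) (playable_of_dg_pos (by omega)) (c := 9)
      (B := 9 * E.card - (N2 E).card - 1) (by omega) (by omega) (by
        intro y hy
        have hy1 := dg_pos_of_playable hy
        have hy2 := del_deg hΔ x y
        have c2 := card_del (del E x) y
        have n2 := N2_card (del_deg hΔ x) y
        obtain ⟨i1, i2⟩ := ih (del (del E x) y).card (by omega) _ rfl
          (del_unif (del_unif h4 x) y) (del_deg (del_deg hΔ x) y)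
        by_cases hy3 : dg (del E x) y = 1
        · have d := drop_one (del_unif h4 x) hy3
          rcases hresp y hy3 with h | h
          · omega
          · have := i2 h
            omega
        · have d := drop_two (del_unif h4 x) (show dg (del E x) y = 2 by omega)
          omega)
    omega
  refine ⟨?_, hI⟩
  by_cases hirr : Irr E
  · have := hI hirr
    omega
  by_cases h0 : N2 E = ∅
  · rw [h0]
    have := gameVal_le_card _ E le_rfl
    simp; omega
  · obtain ⟨x, hx⟩ := Finset.nonempty_iff_ne_empty.mpr h0
    have hx2 := mem_N2.mp hx
    have c1 := card_del E x
    have n1 := N2_card hΔ x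
    have hD := drop_two h4 hx2
    have hempty := (ih (del E x).card (by omega) (del E x) rfl (del_unif h4 x) (del_deg hΔ x)).1
    have key := tg_round (E := E) (x := x) (playable_of_dg_pos (by omega)) (c := 9)
      (B := 9 * E.card - (N2 E).card) (by omega) (by omega) (by
        intro y hy
        have hy1 := dg_pos_of_playable hy
        have hy2 := del_deg hΔ x y
        have c2 := card_del (del E x) y
        have n2 := N2_card (del_deg hΔ x) y
        obtain ⟨i1, i2⟩ := ih (del (del E x) y).card (by omega) _ rfl
          (del_unif (del_unif h4 x) y) (del_deg (del_deg hΔ x) y)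
        by_cases hy3 : dg (del E x) y = 1
        · have d := drop_one (del_unif h4 x) hy3
          by_cases h3 : (N2 (del E x) ∩ nb (del E x) y).card = 3
          · have := i2 (keyR h4 hΔ hirr hx hy3 h3)
            omega
          · omega
        · have d := drop_two (del_unif h4 x) (show dg (del E x) y = 2 by omega)
          omega)
    omega

/-- weights when the maximum degree is at most three -/
def f3 : ℕ → ℕ
  | 0 => 0
  | 1 => 655
  | 2 => 750
  | _ => 845

/-- weights in general -/
def f4 : ℕ → ℕ
  | 0 => 0
  | 1 => 831
  | 2 => 838
  | 3 => 845
  | _ => 852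

theorem phase2' (E : Finset (Finset V)) (h4 : ∀ e ∈ E, e.card = 4) (hΔ : ∀ v, dg E v ≤ 2) :
    3024 * gameVal true E ≤ 852 * E.card + ∑ v, f3 (dg E v) := by
  have h1 := (phase2 _ E rfl h4 hΔ).1
  have h2 := sum_dg E h4
  have h3 : ∑ v, 543 * dg E v ≤ ∑ v, (f3 (dg E v) + if dg E v = 2 then 336 else 0) := by
    apply Finset.sum_le_sum
    intro v _
    have := hΔ v
    interval_cases dg E v <;> simp [f3]
  rw [← Finset.mul_sum, h2, Finset.sum_add_distrib, ← Finset.sum_filter, Finset.sum_const] at h3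
  have h5 : (Finset.univ.filter (fun v => dg E v = 2)).card = (N2 E).card := rfl
  rw [h5, smul_eq_mul] at h3
  omega

theorem phase3 (n : ℕ) : ∀ E : Finset (Finset V), E.card = n → (∀ e ∈ E, e.card = 4) →
    (∀ v, dg E v ≤ 3) →
    3024 * gameVal true E ≤ 852 * E.card + ∑ v, f3 (dg E v) := by
  induction n using Nat.strong_induction_on with
  | _ n ih =>
  intro E hE h4 hΔ
  by_cases h2 : ∀ v, dg E v ≤ 2
  · exact phase2' E h4 h2
  push Not at h2
  obtain ⟨x, hx⟩ := h2
  have hx3 : dg E x = 3 := le_antisymm (hΔ x) hx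
  have hslope : ∀ d, d < 3 → f3 d + 95 ≤ f3 (d + 1) := by
    intro d hd; interval_cases d <;> simp [f3]
  have g1 := move_gain E h4 (f := f3) rfl hslope hΔ x
  have c1 := card_del E x
  rw [hx3, show f3 3 = 845 from rfl] at g1
  refine tg_round (x := x) (playable_of_dg_pos (by omega)) (by omega) (by omega) ?_
  intro y hy
  have hy1 := dg_pos_of_playable hy
  have hy2 := del_deg hΔ x y
  have c2 := card_del (del E x) y
  have g2 := move_gain (del E x) (del_unif h4 x) (f := f3) rfl hslope (del_deg hΔ x) y
  have i := ih (del (del E x) y).card (by omega) _ rfl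
          (del_unif (del_unif h4 x) y) (del_deg (del_deg hΔ x) y)
  have hf : 655 ≤ f3 (dg (del E x) y) := by
    interval_cases dg (del E x) y <;> simp [f3]
  omega

theorem phase4 (n : ℕ) : ∀ E : Finset (Finset V), E.card = n → (∀ e ∈ E, e.card = 4) →
    3024 * gameVal true E ≤ 852 * E.card + ∑ v, f4 (dg E v) := by
  induction n using Nat.strong_induction_on with
  | _ n ih =>
  intro E hE h4
  have hf1 : ∀ d, 1 ≤ d → 831 ≤ f4 d := by
    intro d hd
    match d, hd with
    | 1, _ => simp [f4]
    | 2, _ => simp [f4]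
    | 3, _ => simp [f4]
    | (k + 4), _ => simp [f4]
  have hf4 : ∀ d, 4 ≤ d → f4 d = 852 := by
    intro d hd
    obtain ⟨k, rfl⟩ := Nat.exists_eq_add_of_le' hd
    rfl
  by_cases h3 : ∀ v, dg E v ≤ 3
  · refine (phase3 _ E rfl h4 h3).trans ?_
    gcongr with v
    have := h3 v
    interval_cases dg E v <;> simp [f3, f4]
  by_cases hΔ : ∀ v, dg E v ≤ 4
  · push Not at h3
    obtain ⟨x, hx⟩ := h3
    have hx4 : dg E x = 4 := le_antisymm (hΔ x) hx
    have hslope : ∀ d, d < 4 → f4 d + 7 ≤ f4 (d + 1) := by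
      intro d hd; interval_cases d <;> simp [f4]
    have g1 := move_gain E h4 (f := f4) rfl hslope hΔ x
    have c1 := card_del E x
    rw [hx4, show f4 4 = 852 from rfl] at g1
    refine tg_round (x := x) (playable_of_dg_pos (by omega)) (by omega) (by omega) ?_
    intro y hy
    have hy1 := dg_pos_of_playable hy
    have c2 := card_del (del E x) y
    have g2 := move_gain (del E x) (del_unif h4 x) (f := f4) rfl hslope (del_deg hΔ x) y
    have i := ih (del (del E x) y).card (by omega) _ rfl (del_unif (del_unif h4 x) y)
    have hf := hf1 _ hy1
    omega
  · push Not at hΔ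
    obtain ⟨x, hx⟩ := hΔ
    have hslope : ∀ d, d < E.card → f4 d + 0 ≤ f4 (d + 1) := by
      intro d _
      match d with
      | 0 => simp [f4]
      | 1 => simp [f4]
      | 2 => simp [f4]
      | 3 => simp [f4]
      | (k + 4) => simp [f4]
    have hΔ : ∀ v, dg E v ≤ E.card := fun v => Finset.card_filter_le _ _
    have g1 := move_gain E h4 (f := f4) rfl hslope hΔ x
    have c1 := card_del E x
    rw [hf4 _ (by omega)] at g1
    refine tg_round (x := x) (playable_of_dg_pos (by omega)) (by omega) (by omega) ?_
    intro y hy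
    have hy1 := dg_pos_of_playable hy
    have c2 := card_del (del E x) y
    have g2 := move_gain (del E x) (del_unif h4 x) (f := f4) rfl hslope (del_deg hΔ x) y
    have i := ih (del (del E x) y).card (by omega) _ rfl (del_unif (del_unif h4 x) y)
    have hf := hf1 _ hy1
    omega


/-- If `H` is a `4`-uniform hypergraph, then `τ_g(H) ≤ (71/252)(n(H) + m(H))`. -/
theorem gameTransversalNum_le_of_four_uniform
    {V : Type} [Fintype V] [DecidableEq V] (E : Finset (Finset V))
    (h4 : ∀ e ∈ E, e.card = 4) :
    (gameTransversalNum E : ℚ) ≤ (71 / 252) * (Fintype.card V + E.card) := by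
  have h := phase4 _ E rfl h4
  have hs : ∑ v, f4 (dg E v) ≤ 852 * Fintype.card V := by
    have : ∑ v, f4 (dg E v) ≤ ∑ _v : V, 852 := by
      apply Finset.sum_le_sum
      intro v _
      match dg E v with
      | 0 => simp [f4]
      | 1 => simp [f4]
      | 2 => simp [f4]
      | 3 => simp [f4]
      | (k + 4) => simp [f4]
    simpa [mul_comm] using this
  have h2 : 3024 * gameVal true E ≤ 852 * (Fintype.card V + E.card) := by omega
  have h3 : (3024 : ℚ) * (gameVal true E : ℚ) ≤ 852 * ((Fintype.card V : ℚ) + (E.card : ℚ)) := by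
    exact_mod_cast h2
  unfold gameTransversalNum
  linarith
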